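/- One-step expectation bound for Quantile-RaSK with exact step (Theorem 3.2(b)): under the same setup and hypotheses as Theorem 3.2(a) — A ∈ ℝ^{m×n} full rank with unit-norm rows, b = A x̂ + b^c + r with exactly βm corruptions, β < q < 1 − β, condition (♦), x ∈ ℝ^n with x* ∈ ∂f(x) ∩ Range(Aᵀ), Q the q-quantile of residuals, N₂ = {i : |⟨a_i, x⟩ − b_i| ≤ Q} with |N₂| = qm — define for i ∈ N₂ the exact-step update: t_i a minimizer of t ↦ f*(x* − t·a_i) + t·b_i, x_i'* = x* − t_i·a_i, and x_i' such that x_i'* ∈ ∂f(x_i'). Then (1/(qm))·Σ_{i ∈ N₂} D_f^{x_i'*}(x_i', x̂) ≤ (1 − C₁)·D_f^{x*}(x, x̂) + C₂·‖r‖_∞² + (2/√(qm))·‖r‖_∞·‖A‖_{1,2} + (2λ/(qm))·‖b − A x̂‖·‖A‖_{1,2}, with C₁, C₂ as in Theorem 3.2(a) and ‖A‖_{1,2} = (Σ_{i=1}^m ‖a_i‖₁²)^{1/2}. -/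

import Mathlib

/-- Euclidean inner product on finite-dimensional real coordinate space. -/
noncomputable def ip {I : Type*} [Fintype I] (u v : I → ℝ) : ℝ := ∑ i, u i * v i

/-- Euclidean norm. -/
noncomputable def enorm2 {I : Type*} [Fintype I] (v : I → ℝ) : ℝ :=
  Real.sqrt (∑ i, (v i) ^ 2)

/-- ℓ₁ norm. -/
noncomputable def norm1 {I : Type*} [Fintype I] (v : I → ℝ) : ℝ := ∑ i, |v i|

/-- ℓ∞ norm. -/
noncomputable def normInf {I : Type*} [Fintype I] (v : I → ℝ) : ℝ := ⨆ i, |v i|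

/-- Subdifferential of a convex function. -/
def subdiff {I : Type*} [Fintype I] (f : (I → ℝ) → ℝ) (x : I → ℝ) : Set (I → ℝ) :=
  {g | ∀ y, f y ≥ f x + ip g (y - x)}

/-- Bregman distance `D_f^{g}(x, y)` with respect to `f` and subgradient `g ∈ ∂f(x)`. -/
noncomputable def breg {I : Type*} [Fintype I] (f : (I → ℝ) → ℝ) (g x y : I → ℝ) : ℝ :=
  f y - f x - ip g (y - x)

/-- Fenchel conjugate. -/
noncomputable def fconj {I : Type*} [Fintype I] (f : (I → ℝ) → ℝ) (u : I → ℝ) : ℝ :=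
  ⨆ z, (ip u z - f z)

/-- Soft shrinkage (soft thresholding) operator. -/
noncomputable def softShrink {I : Type*} [Fintype I] (lam : ℝ) (x : I → ℝ) : I → ℝ :=
  fun i => Real.sign (x i) * max (|x i| - lam) 0

/-- Smallest singular value `σ_min(M) = inf_{x ≠ 0} ‖Mx‖/‖x‖`. -/
noncomputable def sigmaMin {I J : Type*} [Fintype I] [Fintype J] (M : Matrix I J ℝ) : ℝ :=
  sInf {r | ∃ x : J → ℝ, x ≠ 0 ∧ r = enorm2 (M.mulVec x) / enorm2 x}

/-- Largest singular value `σ_max(M) = sup_{x ≠ 0} ‖Mx‖/‖x‖`. -/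
noncomputable def sigmaMax {I J : Type*} [Fintype I] [Fintype J] (M : Matrix I J ℝ) : ℝ :=
  sSup {r | ∃ x : J → ℝ, x ≠ 0 ∧ r = enorm2 (M.mulVec x) / enorm2 x}

/-- Frobenius norm. -/
noncomputable def frobNorm {I J : Type*} [Fintype I] [Fintype J] (M : Matrix I J ℝ) : ℝ :=
  Real.sqrt (∑ i, ∑ j, (M i j) ^ 2)

/-- `‖A‖_{1,2} = sqrt (∑ i ‖a_i‖₁²)` where `a_iᵀ` are the rows of `A`. -/
noncomputable def norm12 {m n : ℕ} (A : Matrix (Fin m) (Fin n) ℝ) : ℝ :=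
  Real.sqrt (∑ i, (norm1 (A i)) ^ 2)

/-- Column submatrix `A_J`. -/
noncomputable def colSub {m n : ℕ} (A : Matrix (Fin m) (Fin n) ℝ) (J : Finset (Fin n)) :
    Matrix (Fin m) {j // j ∈ J} ℝ := A.submatrix id Subtype.val

/-- Row submatrix `A_I`. -/
noncomputable def rowSub {m n : ℕ} (A : Matrix (Fin m) (Fin n) ℝ) (I : Finset (Fin m)) :
    Matrix {i // i ∈ I} (Fin n) ℝ := A.submatrix Subtype.val id

/-- Submatrix `A_{I,J}` with rows in `I` and columns in `J`. -/
noncomputable def subMat {m n : ℕ} (A : Matrix (Fin m) (Fin n) ℝ)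
    (I : Finset (Fin m)) (J : Finset (Fin n)) :
    Matrix {i // i ∈ I} {j // j ∈ J} ℝ := A.submatrix Subtype.val Subtype.val

/-- `σ̃_min(A) = min{σ_min(A_J) : J ⊆ {1,…,n}, A_J ≠ 0}`. -/
noncomputable def sigmaTildeMin {m n : ℕ} (A : Matrix (Fin m) (Fin n) ℝ) : ℝ :=
  sInf {r | ∃ J : Finset (Fin n), colSub A J ≠ 0 ∧ r = sigmaMin (colSub A J)}

/-- `σ̃_{q−β,min}(A)` (with `k = (q−β)m`): min of `σ_min(A_{I,J})` over `|I| = k` and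
`J` nonempty. -/
noncomputable def sigmaTildeQBMin {m n : ℕ} (A : Matrix (Fin m) (Fin n) ℝ) (k : ℕ) : ℝ :=
  sInf {r | ∃ (I : Finset (Fin m)) (J : Finset (Fin n)),
    I.card = k ∧ J.Nonempty ∧ r = sigmaMin (subMat A I J)}

/-- Variant of `σ̃_{q−β,min}(A)` requiring moreover `A_J ≠ 0`. -/
noncomputable def sigmaTildeQBMin' {m n : ℕ} (A : Matrix (Fin m) (Fin n) ℝ) (k : ℕ) : ℝ :=
  sInf {r | ∃ (I : Finset (Fin m)) (J : Finset (Fin n)),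
    I.card = k ∧ J.Nonempty ∧ colSub A J ≠ 0 ∧ r = sigmaMin (subMat A I J)}

/-- `σ_{q−β,min}(A)` (with `k = (q−β)m`): min of `σ_min(A_I)` over `|I| = k`. -/
noncomputable def sigmaQBMin {m n : ℕ} (A : Matrix (Fin m) (Fin n) ℝ) (k : ℕ) : ℝ :=
  sInf {r | ∃ I : Finset (Fin m), I.card = k ∧ r = sigmaMin (rowSub A I)}

/-- The increasingly sorted rearrangement `y_(1) ≤ … ≤ y_(m)` of a finite tuple. -/
noncomputable def sortedVal {m : ℕ} (y : Fin m → ℝ) : Fin m → ℝ := y ∘ Tuple.sort y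

/-- The `q`-quantile of `y_1, …, y_m` in the case where `qm = k` is an integer:
`(y_(k) + y_(k+1))/2` (1-indexed). -/
noncomputable def quantileAt {m : ℕ} (k : ℕ) (y : Fin m → ℝ) : ℝ :=
  if h : 0 < k ∧ k < m then
    (sortedVal y ⟨k - 1, by omega⟩ + sortedVal y ⟨k, h.2⟩) / 2
  else 0

/-- `|x̂|_min = min{|x̂_j| : x̂_j ≠ 0}`. -/
noncomputable def xminOf {n : ℕ} (xhat : Fin n → ℝ) : ℝ :=
  sInf {r | ∃ j, xhat j ≠ 0 ∧ r = |xhat j|}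

/-!
Writing `f = φ + ½‖·‖²` with `φ = λ‖·‖₁`, the Bregman distance splits as
`D_f^g(x, y) = D_φ^{g - x}(x, y) + ½‖y - x‖²`. The first summand is nonnegative and, coordinate by
coordinate, at most `2λ / |y|_min` times `‖y - x‖²`, so `D_f` and `‖y - x‖²` are comparable.

The exact step from `g` to `g' = g - t a ∈ ∂f(x')` minimizes `t ↦ f*(g - t a) + t b`. Comparing its
value with the one at the inexact step `t = ρ := ⟨a, x⟩ - b`, where `f*` is controlled by its
1-smoothness, bounds the new Bregman distance by `D + ½ρ² - ρ⟨a, x - y⟩ + (t - ρ)(⟨a, y⟩ - b)`. The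
exact step lands on the hyperplane `⟨a, ·⟩ = b`, hence `ρ - t = ⟨a, (g' - x') - (g - x)⟩`, and
`|ρ - t| ≤ 2λ‖a‖₁` since subgradients of `φ` have entries in `[-λ, λ]`.

In the sum over the selected rows, `½ρ² - ρh = ½(h - ρ)² - ½h²` with `h = ⟨a, x - y⟩`. On an
uncorrupted row `h - ρ` is the noise, and the `h²` produce the gain through `σ̃`. On a
corrupted row `|ρ|` is at most the quantile, which is in turn controlled by averaging the residuals
over the many uncorrupted rows above it.
-/

section Euclidean

variable {I : Type*} [Fintype I]

lemma ip_add_left (u v w : I → ℝ) : ip (u + v) w = ip u w + ip v w := add_dotProduct u v w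

lemma ip_sub_left (u v w : I → ℝ) : ip (u - v) w = ip u w - ip v w := sub_dotProduct u v w

lemma ip_sub_right (u v w : I → ℝ) : ip u (v - w) = ip u v - ip u w := dotProduct_sub u v w

lemma ip_smul_left (c : ℝ) (u v : I → ℝ) : ip (c • u) v = c * ip u v := smul_dotProduct c u v

lemma ip_smul_right (c : ℝ) (u v : I → ℝ) : ip u (c • v) = c * ip u v := dotProduct_smul c u v

lemma ip_comm (u v : I → ℝ) : ip u v = ip v u := dotProduct_comm u v

lemma enorm2_nonneg (v : I → ℝ) : 0 ≤ enorm2 v := Real.sqrt_nonneg _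

lemma enorm2_zero : enorm2 (0 : I → ℝ) = 0 := by simp [enorm2]

lemma enorm2_sq (v : I → ℝ) : enorm2 v ^ 2 = ∑ i, v i ^ 2 :=
  Real.sq_sqrt (Finset.sum_nonneg fun _ _ ↦ sq_nonneg _)

lemma enorm2_sq_eq_ip (v : I → ℝ) : enorm2 v ^ 2 = ip v v := by
  rw [enorm2_sq]
  simp only [ip, sq]

lemma enorm2_pos {v : I → ℝ} (hv : v ≠ 0) : 0 < enorm2 v := by
  obtain ⟨j, hj⟩ := Function.ne_iff.mp hv
  exact Real.sqrt_pos.mpr <|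
    Finset.sum_pos' (fun _ _ ↦ sq_nonneg _) ⟨j, Finset.mem_univ j, sq_pos_of_ne_zero hj⟩

lemma enorm2_smul_sq (c : ℝ) (v : I → ℝ) : enorm2 (c • v) ^ 2 = c ^ 2 * enorm2 v ^ 2 := by
  rw [enorm2_sq_eq_ip, enorm2_sq_eq_ip, ip_smul_left, ip_smul_right]
  ring

lemma enorm2_sub_sq (u v : I → ℝ) :
    enorm2 (u - v) ^ 2 = enorm2 u ^ 2 - 2 * ip u v + enorm2 v ^ 2 := by
  simp only [enorm2_sq_eq_ip, ip_sub_left, ip_sub_right]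
  rw [ip_comm v u]
  ring

lemma abs_ip_le_mul_norm1 {c : ℝ} (a : I → ℝ) {v : I → ℝ} (hv : ∀ j, |v j| ≤ c) :
    |ip a v| ≤ c * norm1 a :=
  calc |ip a v| ≤ ∑ j, |a j * v j| := Finset.abs_sum_le_sum_abs _ _
    _ ≤ ∑ j, c * |a j| := by
        gcongr with j
        rw [abs_mul, mul_comm]
        gcongr
        exact hv j
    _ = c * norm1 a := (Finset.mul_sum ..).symm

lemma sum_abs_le_sqrt_card_mul_enorm2 (s : Finset I) (v : I → ℝ) :
    ∑ i ∈ s, |v i| ≤ √s.card * enorm2 v := by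
  refine le_of_sq_le_sq ?_ (mul_nonneg (Real.sqrt_nonneg _) (enorm2_nonneg v))
  calc (∑ i ∈ s, |v i|) ^ 2 ≤ s.card * ∑ i ∈ s, |v i| ^ 2 := sq_sum_le_card_mul_sum_sq
    _ ≤ s.card * ∑ i, v i ^ 2 := by
        simp only [sq_abs]
        gcongr
        exact s.subset_univ
    _ = (√s.card * enorm2 v) ^ 2 := by
        rw [mul_pow, Real.sq_sqrt (Nat.cast_nonneg _), enorm2_sq]

lemma abs_le_normInf (v : I → ℝ) (i : I) : |v i| ≤ normInf v :=
  le_ciSup (f := fun i ↦ |v i|) (Set.finite_range _).bddAbove i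

lemma normInf_nonneg (v : I → ℝ) : 0 ≤ normInf v := Real.iSup_nonneg fun _ ↦ abs_nonneg _

lemma norm1_nonneg (v : I → ℝ) : 0 ≤ norm1 v := Finset.sum_nonneg fun _ _ ↦ abs_nonneg _

lemma convexOn_norm1 : ConvexOn ℝ Set.univ (norm1 : (I → ℝ) → ℝ) := by
  refine ⟨convex_univ, fun x _ y _ a b ha hb _ ↦ ?_⟩
  simp only [norm1, smul_eq_mul, Finset.mul_sum, ← Finset.sum_add_distrib]
  gcongr with i
  simpa [abs_mul, abs_of_nonneg ha, abs_of_nonneg hb] using abs_add_le (a * x i) (b * y i)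

end Euclidean

section SingularValues

variable {I J : Type*} [Fintype I] [Fintype J]

lemma enorm2_mulVec_le_frobNorm_mul (M : Matrix I J ℝ) (x : J → ℝ) :
    enorm2 (M.mulVec x) ≤ frobNorm M * enorm2 x := by
  rw [frobNorm, enorm2, enorm2, ← Real.sqrt_mul (by positivity), Finset.sum_mul]
  gcongr
  exact Finset.sum_mul_sq_le_sq_mul_sq _ _ _

lemma sigmaMax_nonneg (M : Matrix I J ℝ) : 0 ≤ sigmaMax M := by
  apply Real.sSup_nonneg
  rintro _ ⟨x, -, rfl⟩
  exact div_nonneg (enorm2_nonneg _) (enorm2_nonneg _)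

lemma enorm2_mulVec_le (M : Matrix I J ℝ) (x : J → ℝ) :
    enorm2 (M.mulVec x) ≤ sigmaMax M * enorm2 x := by
  rcases eq_or_ne x 0 with rfl | hx
  · simp [enorm2_zero]
  rw [← div_le_iff₀ (enorm2_pos hx)]
  refine le_csSup ⟨frobNorm M, ?_⟩ ⟨x, hx, rfl⟩
  rintro _ ⟨z, hz, rfl⟩
  exact (div_le_iff₀ (enorm2_pos hz)).mpr (enorm2_mulVec_le_frobNorm_mul M z)

lemma sigmaMin_nonneg (M : Matrix I J ℝ) : 0 ≤ sigmaMin M := by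
  apply Real.sInf_nonneg
  rintro _ ⟨x, -, rfl⟩
  exact div_nonneg (enorm2_nonneg _) (enorm2_nonneg _)

lemma sigmaMin_mul_enorm2_le (M : Matrix I J ℝ) (x : J → ℝ) :
    sigmaMin M * enorm2 x ≤ enorm2 (M.mulVec x) := by
  rcases eq_or_ne x 0 with rfl | hx
  · simp [enorm2_zero]
  rw [← le_div_iff₀ (enorm2_pos hx)]
  refine csInf_le ⟨0, ?_⟩ ⟨x, hx, rfl⟩
  rintro _ ⟨z, -, rfl⟩
  exact div_nonneg (enorm2_nonneg _) (enorm2_nonneg _)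

variable {m n : ℕ}

lemma sigmaTildeQBMin_nonneg (A : Matrix (Fin m) (Fin n) ℝ) (k : ℕ) :
    0 ≤ sigmaTildeQBMin A k := by
  apply Real.sInf_nonneg
  rintro _ ⟨I, J, -, -, rfl⟩
  exact sigmaMin_nonneg _

lemma sigmaTildeQBMin_le_sigmaMin (A : Matrix (Fin m) (Fin n) ℝ) (I : Finset (Fin m))
    {J : Finset (Fin n)} (hJ : J.Nonempty) :
    sigmaTildeQBMin A I.card ≤ sigmaMin (subMat A I J) := by
  refine csInf_le ⟨0, ?_⟩ ⟨I, J, rfl, hJ, rfl⟩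
  rintro _ ⟨I, J, -, -, rfl⟩
  exact sigmaMin_nonneg _

lemma sq_sigmaMin_subMat_univ_mul_le (A : Matrix (Fin m) (Fin n) ℝ) (I : Finset (Fin m))
    (z : Fin n → ℝ) :
    sigmaMin (subMat A I Finset.univ) ^ 2 * enorm2 z ^ 2 ≤ ∑ i ∈ I, A.mulVec z i ^ 2 := by
  have hmul (i : I) : (subMat A I Finset.univ).mulVec (fun j ↦ z j) i = A.mulVec z i :=
    Finset.sum_coe_sort Finset.univ fun j ↦ A i j * z j
  have hsq := pow_le_pow_left₀ (mul_nonneg (sigmaMin_nonneg _) (enorm2_nonneg _))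
    (sigmaMin_mul_enorm2_le (subMat A I Finset.univ) fun j ↦ z j) 2
  rwa [mul_pow, enorm2_sq, enorm2_sq, Finset.sum_coe_sort Finset.univ fun j ↦ z j ^ 2,
    Fintype.sum_congr _ _ fun i ↦ congrArg (· ^ 2) (hmul i),
    Finset.sum_coe_sort I fun i ↦ A.mulVec z i ^ 2, ← enorm2_sq] at hsq

lemma sq_sigmaTildeQBMin_mul_le (A : Matrix (Fin m) (Fin n) ℝ) {k : ℕ} {G : Finset (Fin m)}
    (hk : k ≤ G.card) (z : Fin n → ℝ) :
    sigmaTildeQBMin A k ^ 2 * enorm2 z ^ 2 ≤ ∑ i ∈ G, A.mulVec z i ^ 2 := by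
  rcases isEmpty_or_nonempty (Fin n) with hn | hn
  · rw [Subsingleton.elim z 0, enorm2_zero]
    simp
  obtain ⟨I, hIG, rfl⟩ := Finset.exists_subset_card_eq hk
  calc sigmaTildeQBMin A I.card ^ 2 * enorm2 z ^ 2
      ≤ sigmaMin (subMat A I Finset.univ) ^ 2 * enorm2 z ^ 2 := by
        gcongr
        · exact sigmaTildeQBMin_nonneg A _
        · exact sigmaTildeQBMin_le_sigmaMin A I Finset.univ_nonempty
    _ ≤ ∑ i ∈ I, A.mulVec z i ^ 2 := sq_sigmaMin_subMat_univ_mul_le A I z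
    _ ≤ ∑ i ∈ G, A.mulVec z i ^ 2 := by gcongr

lemma norm12_nonneg (A : Matrix (Fin m) (Fin n) ℝ) : 0 ≤ norm12 A := Real.sqrt_nonneg _

lemma sum_norm1_mul_abs_le (A : Matrix (Fin m) (Fin n) ℝ) (c : Fin m → ℝ)
    (N : Finset (Fin m)) : ∑ i ∈ N, norm1 (A i) * |c i| ≤ enorm2 c * norm12 A :=
  calc ∑ i ∈ N, norm1 (A i) * |c i| ≤ ∑ i, norm1 (A i) * |c i| :=
        Finset.sum_le_sum_of_subset_of_nonneg N.subset_univ fun i _ _ ↦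
          mul_nonneg (norm1_nonneg _) (abs_nonneg _)
    _ ≤ norm12 A * enorm2 c := by
        simpa only [sq_abs, norm12, enorm2] using
          Real.sum_mul_le_sqrt_mul_sqrt Finset.univ (fun i ↦ norm1 (A i)) fun i ↦ |c i|
    _ = enorm2 c * norm12 A := mul_comm _ _

end SingularValues

section Quantile

variable {m k : ℕ}

lemma le_add_card_quantileAt_le (hk : 0 < k) (hkm : k < m) (y : Fin m → ℝ) :
    m ≤ k + (Finset.univ.filter fun i ↦ quantileAt k y ≤ y i).card := by
  have hmono : Monotone (sortedVal y) := Tuple.monotone_sort y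
  have hquantile : quantileAt k y ≤ sortedVal y ⟨k, hkm⟩ := by
    have : sortedVal y ⟨k - 1, by lia⟩ ≤ sortedVal y ⟨k, hkm⟩ := hmono (by simp)
    rw [quantileAt, dif_pos ⟨hk, hkm⟩]
    linarith
  have hsub : (Finset.Ici (⟨k, hkm⟩ : Fin m)).map (Tuple.sort y).toEmbedding ⊆
      Finset.univ.filter fun i ↦ quantileAt k y ≤ y i := by
    intro i hi
    obtain ⟨j, hj, rfl⟩ := Finset.mem_map.mp hi
    exact Finset.mem_filter.mpr
      ⟨Finset.mem_univ _, hquantile.trans (hmono (Finset.mem_Ici.mp hj))⟩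
  have hcard := Finset.card_le_card hsub
  rw [Finset.card_map, Fin.card_Ici] at hcard
  lia

lemma quantileAt_le_enorm2_div_sqrt_add {y h : Fin m → ℝ} {e : ℝ} {V : Finset (Fin m)}
    (hk : 0 < k) (hkV : k + V.card < m) (hy : ∀ i ∉ V, y i ≤ |h i| + e) :
    quantileAt k y ≤ enorm2 h / √(m - k - V.card) + e := by
  set Q := quantileAt k y
  set T := (Finset.univ.filter fun i ↦ Q ≤ y i) \ V
  have hcard : (m - k - V.card : ℝ) ≤ T.card := by
    have hnat : m ≤ k + V.card + T.card := by
      have := le_add_card_quantileAt_le hk (by lia) y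
      have := Finset.le_card_sdiff V (Finset.univ.filter fun i ↦ Q ≤ y i)
      lia
    have : (m : ℝ) ≤ k + V.card + T.card := mod_cast hnat
    linarith
  have hpos : (0 : ℝ) < m - k - V.card := by
    have : (k + V.card : ℝ) < m := mod_cast hkV
    linarith
  have hTpos : (0 : ℝ) < T.card := hpos.trans_le hcard
  have hsum : T.card * Q ≤ √T.card * enorm2 h + T.card * e :=
    calc T.card * Q = ∑ _ ∈ T, Q := by rw [Finset.sum_const, nsmul_eq_mul]
      _ ≤ ∑ i ∈ T, (|h i| + e) := Finset.sum_le_sum fun i hi ↦ by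
          obtain ⟨hiQ, hiV⟩ := Finset.mem_sdiff.mp hi
          exact (Finset.mem_filter.mp hiQ).2.trans (hy i hiV)
      _ = ∑ i ∈ T, |h i| + T.card * e := by
          rw [Finset.sum_add_distrib, Finset.sum_const, nsmul_eq_mul]
      _ ≤ √T.card * enorm2 h + T.card * e := by
          gcongr
          exact sum_abs_le_sqrt_card_mul_enorm2 T h
  calc Q ≤ (√T.card * enorm2 h + T.card * e) / T.card := by
        rwa [le_div_iff₀ hTpos, mul_comm]
    _ = enorm2 h / √T.card + e := by
        rw [add_div, mul_div_right_comm, Real.sqrt_div_self, mul_div_cancel_left₀ e hTpos.ne',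
          inv_mul_eq_div]
    _ ≤ enorm2 h / √(m - k - V.card) + e := by
        gcongr
        exact enorm2_nonneg h

end Quantile

section Bregman

variable {I : Type*} [Fintype I] {f φ : (I → ℝ) → ℝ} {x g : I → ℝ}

/-- The subgradients `g` of `f` at `x` whose affine minorant stays below `f` by at least
`½‖y - x‖²`. For a 1-strongly convex `f` these are all subgradients; asking for this at single
points is enough for the smoothness of the conjugate. -/
def strongSubdiff (f : (I → ℝ) → ℝ) (x : I → ℝ) : Set (I → ℝ) :=
  {g | ∀ y, 1 / 2 * enorm2 (y - x) ^ 2 ≤ breg f g x y}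

lemma mem_subdiff_iff_breg_nonneg : g ∈ subdiff f x ↔ ∀ y, 0 ≤ breg f g x y := by
  refine forall_congr' fun y ↦ ?_
  rw [breg]
  constructor <;> intro <;> linarith

lemma strongSubdiff_subset_subdiff (f : (I → ℝ) → ℝ) (x : I → ℝ) :
    strongSubdiff f x ⊆ subdiff f x := fun _ hg ↦
  mem_subdiff_iff_breg_nonneg.mpr fun y ↦ le_trans (by positivity) (hg y)

lemma breg_add_half_enorm2_sq (φ : (I → ℝ) → ℝ) (g x y : I → ℝ) :
    breg (fun z ↦ φ z + 1 / 2 * enorm2 z ^ 2) g x y =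
      breg φ (g - x) x y + 1 / 2 * enorm2 (y - x) ^ 2 := by
  rw [breg, breg, enorm2_sub_sq, ip_sub_left, ip_sub_right x, ← enorm2_sq_eq_ip, ip_comm y x]
  ring

lemma breg_add_smul_le_of_convexOn (hφ : ConvexOn ℝ Set.univ φ) (g x y : I → ℝ) {τ : ℝ}
    (hτ : 0 ≤ τ) (hτ1 : τ ≤ 1) : breg φ g x (x + τ • (y - x)) ≤ τ * breg φ g x y := by
  have hconv := hφ.2 (Set.mem_univ x) (Set.mem_univ y) (sub_nonneg.mpr hτ1) hτ (by ring)
  rw [show (1 - τ) • x + τ • y = x + τ • (y - x) by module, smul_eq_mul, smul_eq_mul] at hconv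
  rw [breg, breg, add_sub_cancel_left, ip_smul_right]
  linarith

lemma sub_mem_subdiff_of_convexOn (hφ : ConvexOn ℝ Set.univ φ)
    (hg : g ∈ subdiff (fun z ↦ φ z + 1 / 2 * enorm2 z ^ 2) x) : g - x ∈ subdiff φ x := by
  refine mem_subdiff_iff_breg_nonneg.mpr fun y ↦ ?_
  -- Along the segment from `x` to `y` the quadratic part is of second order.
  have hsegment (τ : ℝ) (hτ : 0 < τ) (hτ1 : τ ≤ 1) :
      0 ≤ breg φ (g - x) x y + τ * (1 / 2 * enorm2 (y - x) ^ 2) := by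
    have hnonneg := mem_subdiff_iff_breg_nonneg.mp hg (x + τ • (y - x))
    rw [breg_add_half_enorm2_sq, add_sub_cancel_left, enorm2_smul_sq] at hnonneg
    have hle := breg_add_smul_le_of_convexOn hφ (g - x) x y hτ.le hτ1
    refine (mul_nonneg_iff_of_pos_left hτ).mp ?_
    linarith
  have hlim : Filter.Tendsto (fun τ ↦ breg φ (g - x) x y + τ * (1 / 2 * enorm2 (y - x) ^ 2))
      (nhdsWithin 0 (Set.Ioi 0)) (nhds (breg φ (g - x) x y)) := by
    refine tendsto_nhdsWithin_of_tendsto_nhds (Continuous.tendsto' (by fun_prop) _ _ (by simp))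
  refine ge_of_tendsto hlim ?_
  filter_upwards [Ioc_mem_nhdsGT one_pos] with τ hτ using hsegment τ hτ.1 hτ.2

lemma mem_strongSubdiff_of_convexOn (hφ : ConvexOn ℝ Set.univ φ)
    (hg : g ∈ subdiff (fun z ↦ φ z + 1 / 2 * enorm2 z ^ 2) x) :
    g ∈ strongSubdiff (fun z ↦ φ z + 1 / 2 * enorm2 z ^ 2) x := fun y ↦ by
  have := mem_subdiff_iff_breg_nonneg.mp (sub_mem_subdiff_of_convexOn hφ hg) y
  rw [breg_add_half_enorm2_sq]
  linarith

lemma ip_sub_le_of_mem_subdiff (hg : g ∈ subdiff f x) (z : I → ℝ) :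
    ip g z - f z ≤ ip g x - f x := by
  have := hg z
  rw [ip_sub_right] at this
  linarith

lemma fconj_eq_of_mem_subdiff (hg : g ∈ subdiff f x) : fconj f g = ip g x - f x :=
  le_antisymm (ciSup_le (ip_sub_le_of_mem_subdiff hg)) <|
    le_ciSup (f := fun z ↦ ip g z - f z)
      ⟨_, Set.forall_mem_range.mpr (ip_sub_le_of_mem_subdiff hg)⟩ x

lemma breg_eq_add_fconj_sub_ip (hg : g ∈ subdiff f x) (y : I → ℝ) :
    breg f g x y = f y + fconj f g - ip g y := by
  rw [breg, fconj_eq_of_mem_subdiff hg, ip_sub_right]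
  ring

lemma fconj_add_le_of_mem_strongSubdiff (hg : g ∈ strongSubdiff f x) (v : I → ℝ) :
    fconj f (g + v) ≤ fconj f g + ip v x + 1 / 2 * enorm2 v ^ 2 := by
  rw [fconj_eq_of_mem_subdiff (strongSubdiff_subset_subdiff f x hg)]
  refine ciSup_le fun z ↦ ?_
  have hgrowth : 1 / 2 * enorm2 (z - x) ^ 2 ≤ f z - f x - ip g (z - x) := hg z
  have hyoung : 0 ≤ enorm2 (z - x) ^ 2 - 2 * ip (z - x) v + enorm2 v ^ 2 := by
    rw [← enorm2_sub_sq]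
    positivity
  rw [ip_comm (z - x), ip_sub_right] at hyoung
  rw [ip_sub_right] at hgrowth
  rw [ip_add_left]
  linarith

end Bregman

section ExactStep

variable {I : Type*} [Fintype I] {f : (I → ℝ) → ℝ} {x x' g a : I → ℝ} {b t : ℝ}

/-- `t` is an exact step size for the equation `⟨a, ·⟩ = b` from the dual point `g`: it minimizes
the dual objective along the direction `a`. -/
def IsExactStep (f : (I → ℝ) → ℝ) (g a : I → ℝ) (b t : ℝ) : Prop :=
  ∀ s : ℝ, fconj f (g - t • a) + t * b ≤ fconj f (g - s • a) + s * b

lemma fconj_sub_smul_le (hg : g ∈ strongSubdiff f x) (ha : enorm2 a = 1) (s : ℝ) :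
    fconj f (g - s • a) ≤ fconj f g - s * ip a x + 1 / 2 * s ^ 2 := by
  have hle := fconj_add_le_of_mem_strongSubdiff hg ((-s) • a)
  rw [ip_smul_left, enorm2_smul_sq, ha, neg_smul, ← sub_eq_add_neg] at hle
  linarith

namespace IsExactStep

lemma ip_eq (ht : IsExactStep f g a b t) (ha : enorm2 a = 1)
    (hx' : g - t • a ∈ strongSubdiff f x') : ip a x' = b := by
  have hmin := ht (t + (ip a x' - b))
  have hle := fconj_sub_smul_le hx' ha (ip a x' - b)
  rw [sub_sub, ← add_smul] at hle
  have : (ip a x' - b) ^ 2 ≤ 0 := by linarith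
  exact sub_eq_zero.mp (pow_eq_zero_iff two_ne_zero |>.mp (this.antisymm (sq_nonneg _)))

lemma breg_le (ht : IsExactStep f g a b t) (ha : enorm2 a = 1) (hg : g ∈ strongSubdiff f x)
    (hx' : g - t • a ∈ subdiff f x') (y : I → ℝ) :
    breg f (g - t • a) x' y ≤ breg f g x y +
      (1 / 2 * (ip a x - b) ^ 2 - (ip a x - b) * (ip a x - ip a y)) +
      (ip a x - b - t) * (b - ip a y) := by
  have hmin := ht (ip a x - b)
  have hle := fconj_sub_smul_le hg ha (ip a x - b)
  rw [breg_eq_add_fconj_sub_ip hx', breg_eq_add_fconj_sub_ip (strongSubdiff_subset_subdiff f x hg),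
    ip_sub_left, ip_smul_left]
  linarith

lemma residual_sub_eq_ip (ht : IsExactStep f g a b t) (ha : enorm2 a = 1)
    (hx' : g - t • a ∈ strongSubdiff f x') (x : I → ℝ) :
    ip a x - b - t = ip a ((g - t • a - x') - (g - x)) := by
  simp only [ip_sub_right, ip_smul_right]
  rw [ht.ip_eq ha hx', ← enorm2_sq_eq_ip, ha]
  ring

end IsExactStep

end ExactStep

section SparseObjective

variable {I : Type*} [Fintype I] {lam : ℝ} {x g w : I → ℝ}

/-- The objective `λ‖x‖₁ + ½‖x‖²` of sparse Kaczmarz methods. -/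
noncomputable def sparseObjective (lam : ℝ) (x : I → ℝ) : ℝ :=
  lam * norm1 x + 1 / 2 * enorm2 x ^ 2

lemma apply_mul_le_of_mem_subdiff_norm1 (hw : w ∈ subdiff (fun z ↦ lam * norm1 z) x) (j : I)
    (δ : ℝ) : w j * δ ≤ lam * |x j + δ| - lam * |x j| := by
  classical
  have hsub := hw (x + Pi.single j δ)
  have hip : ip w (Pi.single j δ) = w j * δ := dotProduct_single w δ j
  have hnorm : norm1 (x + Pi.single j δ) - norm1 x = |x j + δ| - |x j| := by
    rw [norm1, norm1, ← Finset.sum_sub_distrib, Fintype.sum_eq_single j]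
    · simp
    · intro i hi
      simp [hi]
  rw [add_sub_cancel_left, hip] at hsub
  rw [← mul_sub, ← hnorm, mul_sub]
  linarith

lemma abs_apply_le_of_mem_subdiff_norm1 (hlam : 0 ≤ lam)
    (hw : w ∈ subdiff (fun z ↦ lam * norm1 z) x) (j : I) : |w j| ≤ lam := by
  have hbound (δ : ℝ) (hδ : |δ| = 1) : w j * δ ≤ lam := by
    have htri : lam * |x j + δ| ≤ lam * (|x j| + 1) := by
      gcongr
      exact hδ ▸ abs_add_le (x j) δ
    linarith [apply_mul_le_of_mem_subdiff_norm1 hw j δ]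
  exact abs_le'.mpr ⟨by linarith [hbound 1 abs_one], by linarith [hbound (-1) (by simp)]⟩

lemma apply_mul_apply_eq_of_mem_subdiff_norm1 (hw : w ∈ subdiff (fun z ↦ lam * norm1 z) x)
    (j : I) : w j * x j = lam * |x j| := by
  have hdouble := apply_mul_le_of_mem_subdiff_norm1 hw j (x j)
  have hzero := apply_mul_le_of_mem_subdiff_norm1 hw j (-x j)
  rw [← two_mul, abs_mul, abs_two] at hdouble
  rw [add_neg_cancel, abs_zero] at hzero
  linarith

lemma convexOn_mul_norm1 (hlam : 0 ≤ lam) :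
    ConvexOn ℝ Set.univ fun z : I → ℝ ↦ lam * norm1 z := convexOn_norm1.smul hlam

lemma sub_mem_subdiff_norm1 (hlam : 0 ≤ lam) (hg : g ∈ subdiff (sparseObjective lam) x) :
    g - x ∈ subdiff (fun z ↦ lam * norm1 z) x :=
  sub_mem_subdiff_of_convexOn (convexOn_mul_norm1 hlam) hg

lemma mem_strongSubdiff_sparseObjective (hlam : 0 ≤ lam)
    (hg : g ∈ subdiff (sparseObjective lam) x) : g ∈ strongSubdiff (sparseObjective lam) x :=
  mem_strongSubdiff_of_convexOn (convexOn_mul_norm1 hlam) hg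

lemma breg_norm1_eq_sum (hw : w ∈ subdiff (fun z ↦ lam * norm1 z) x) (y : I → ℝ) :
    breg (fun z ↦ lam * norm1 z) w x y = ∑ j, (lam * |y j| - w j * y j) := by
  simp only [breg, norm1, ip, Finset.mul_sum, ← Finset.sum_sub_distrib]
  refine Finset.sum_congr rfl fun j _ ↦ ?_
  rw [Pi.sub_apply, mul_sub, apply_mul_apply_eq_of_mem_subdiff_norm1 hw j]
  ring

-- If `x` and `y` have the same sign the gap vanishes; otherwise `μ ≤ |y| ≤ |x - y|`.
lemma mul_abs_gap_le {x y w μ : ℝ} (hlam : 0 ≤ lam) (hμ : 0 ≤ μ) (hy : y ≠ 0 → μ ≤ |y|)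
    (hw : |w| ≤ lam) (hwx : w * x = lam * |x|) :
    μ * (lam * |y| - w * y) ≤ 2 * lam * (y - x) ^ 2 := by
  rcases eq_or_ne y 0 with rfl | hy0
  · simpa using mul_nonneg (mul_nonneg zero_le_two hlam) (sq_nonneg x)
  rcases lt_or_ge 0 (x * y) with hxy | hxy
  · have hgap : lam * |y| - w * y = 0 := by
      have : x ≠ 0 := left_ne_zero_of_mul hxy.ne'
      have habs : |x| * y = x * |y| := by
        rcases pos_and_pos_or_neg_and_neg_of_mul_pos hxy with ⟨hx, hy⟩ | ⟨hx, hy⟩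
        · rw [abs_of_pos hx, abs_of_pos hy]
        · rw [abs_of_neg hx, abs_of_neg hy, neg_mul_comm]
      refine (mul_eq_zero.mp ?_).resolve_left this
      linear_combination -lam * habs - y * hwx
    rw [hgap, mul_zero]
    positivity
  · have hgap : lam * |y| - w * y ≤ 2 * lam * |y| := by
      have : |w * y| ≤ lam * |y| := by
        rw [abs_mul]
        gcongr
      linarith [neg_abs_le (w * y)]
    calc μ * (lam * |y| - w * y) ≤ μ * (2 * lam * |y|) := by gcongr
      _ ≤ |y| * (2 * lam * |y|) := by gcongr; exact hy hy0
      _ = 2 * lam * y ^ 2 := by rw [← sq_abs y]; ring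
      _ ≤ 2 * lam * (y - x) ^ 2 := by gcongr 2 * lam * ?_; nlinarith [sq_nonneg x]

variable {n : ℕ} {y : Fin n → ℝ}

lemma xminOf_le {j : Fin n} (hj : y j ≠ 0) : xminOf y ≤ |y j| := by
  refine csInf_le ⟨0, ?_⟩ ⟨j, hj, rfl⟩
  rintro _ ⟨i, -, rfl⟩
  exact abs_nonneg _

lemma xminOf_pos (hy : y ≠ 0) : 0 < xminOf y := by
  have hfin : {r | ∃ j, y j ≠ 0 ∧ r = |y j|}.Finite :=
    (Set.finite_range fun j ↦ |y j|).subset <| by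
      rintro _ ⟨j, -, rfl⟩
      exact Set.mem_range_self j
  obtain ⟨i, hi⟩ := Function.ne_iff.mp hy
  have hne : {r | ∃ j, y j ≠ 0 ∧ r = |y j|}.Nonempty := ⟨_, i, hi, rfl⟩
  obtain ⟨j, hj, hmin⟩ := hne.csInf_mem hfin
  rw [xminOf, hmin]
  exact abs_pos.mpr hj

lemma xminOf_mul_breg_norm1_le {x w : Fin n → ℝ} (hlam : 0 ≤ lam) (hy : y ≠ 0)
    (hw : w ∈ subdiff (fun z ↦ lam * norm1 z) x) :
    xminOf y * breg (fun z ↦ lam * norm1 z) w x y ≤ 2 * lam * enorm2 (y - x) ^ 2 := by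
  rw [breg_norm1_eq_sum hw, enorm2_sq, Finset.mul_sum, Finset.mul_sum]
  exact Finset.sum_le_sum fun j _ ↦ mul_abs_gap_le hlam (xminOf_pos hy).le xminOf_le
    (abs_apply_le_of_mem_subdiff_norm1 hlam hw j) (apply_mul_apply_eq_of_mem_subdiff_norm1 hw j)

lemma xminOf_div_mul_breg_sparseObjective_le {x g : Fin n → ℝ} (hlam : 0 ≤ lam) (hy : y ≠ 0)
    (hg : g ∈ subdiff (sparseObjective lam) x) :
    xminOf y / (xminOf y + 2 * lam) * breg (sparseObjective lam) g x y ≤ enorm2 (y - x) ^ 2 := by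
  have hμ := xminOf_pos hy
  have hgap := xminOf_mul_breg_norm1_le hlam hy (sub_mem_subdiff_norm1 hlam hg)
  have hsplit : breg (sparseObjective lam) g x y = _ :=
    breg_add_half_enorm2_sq (fun z ↦ lam * norm1 z) g x y
  rw [div_mul_eq_mul_div, div_le_iff₀ (by positivity), hsplit]
  linarith [mul_nonneg hμ.le (sq_nonneg (enorm2 (y - x)))]

end SparseObjective

section SumOverRows

lemma breg_sparseObjective_exactStep_le {I : Type*} [Fintype I] {lam b t : ℝ}
    {x x' g a : I → ℝ} (hlam : 0 ≤ lam) (ha : enorm2 a = 1)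
    (hg : g ∈ subdiff (sparseObjective lam) x) (ht : IsExactStep (sparseObjective lam) g a b t)
    (hx' : g - t • a ∈ subdiff (sparseObjective lam) x') (y : I → ℝ) :
    breg (sparseObjective lam) (g - t • a) x' y ≤ breg (sparseObjective lam) g x y +
      (1 / 2 * (ip a x - b) ^ 2 - (ip a x - b) * (ip a x - ip a y)) +
      2 * lam * (norm1 a * |b - ip a y|) := by
  have hdist : |ip a x - b - t| ≤ 2 * lam * norm1 a := by
    rw [ht.residual_sub_eq_ip ha (mem_strongSubdiff_sparseObjective hlam hx') x]
    refine abs_ip_le_mul_norm1 a fun j ↦ (abs_sub _ _).trans ?_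
    rw [two_mul]
    exact add_le_add
      (abs_apply_le_of_mem_subdiff_norm1 hlam (sub_mem_subdiff_norm1 hlam hx') j)
      (abs_apply_le_of_mem_subdiff_norm1 hlam (sub_mem_subdiff_norm1 hlam hg) j)
  have hextra : (ip a x - b - t) * (b - ip a y) ≤ 2 * lam * norm1 a * |b - ip a y| := by
    refine (le_abs_self _).trans ?_
    rw [abs_mul]
    gcongr
  linarith [ht.breg_le ha (mem_strongSubdiff_sparseObjective hlam hg) hx' y]

variable {m n : ℕ}

lemma sum_breg_sparseObjective_exactStep_le {lam : ℝ} (hlam : 0 ≤ lam)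
    {A : Matrix (Fin m) (Fin n) ℝ} (hrows : ∀ i, enorm2 (A i) = 1) {b t : Fin m → ℝ}
    {x g : Fin n → ℝ} {x' : Fin m → Fin n → ℝ} {N : Finset (Fin m)}
    (hg : g ∈ subdiff (sparseObjective lam) x)
    (ht : ∀ i ∈ N, IsExactStep (sparseObjective lam) g (A i) (b i) (t i))
    (hx' : ∀ i ∈ N, g - t i • A i ∈ subdiff (sparseObjective lam) (x' i)) (y : Fin n → ℝ) :
    ∑ i ∈ N, breg (sparseObjective lam) (g - t i • A i) (x' i) y ≤
      N.card * breg (sparseObjective lam) g x y +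
      ∑ i ∈ N, (1 / 2 * (ip (A i) x - b i) ^ 2 - (ip (A i) x - b i) * A.mulVec (x - y) i) +
      2 * lam * (enorm2 (b - A.mulVec y) * norm12 A) := by
  have hmul (i : Fin m) : A.mulVec (x - y) i = ip (A i) x - ip (A i) y := ip_sub_right _ _ _
  calc _ ≤ ∑ i ∈ N, _ := Finset.sum_le_sum fun i hi ↦
        breg_sparseObjective_exactStep_le hlam (hrows i) hg (ht i hi) (hx' i hi) y
    _ = N.card * breg (sparseObjective lam) g x y +
        ∑ i ∈ N, (1 / 2 * (ip (A i) x - b i) ^ 2 - (ip (A i) x - b i) * A.mulVec (x - y) i) +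
        2 * lam * ∑ i ∈ N, norm1 (A i) * |(b - A.mulVec y) i| := by
        simp only [hmul, Finset.sum_add_distrib, Finset.sum_const, nsmul_eq_mul, Finset.mul_sum]
        rfl
    _ ≤ _ := by
        gcongr
        exact sum_norm1_mul_abs_le A _ N

lemma sum_half_sq_sub_mul_le {ι : Type*} [Fintype ι] [DecidableEq ι] {ρ h : ι → ℝ}
    {N V : Finset ι} {R e : ℝ} (hR0 : 0 ≤ R) (hR : ∀ i ∈ N, |ρ i| ≤ R)
    (he : ∀ i ∉ V, |h i - ρ i| ≤ e) :
    ∑ i ∈ N, (1 / 2 * ρ i ^ 2 - ρ i * h i) ≤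
      -(1 / 2) * ∑ i ∈ N \ V, h i ^ 2 + 1 / 2 * N.card * e ^ 2 +
      R * (√V.card * enorm2 h) + 1 / 2 * V.card * R ^ 2 := by
  have hgood : ∑ i ∈ N \ V, (1 / 2 * ρ i ^ 2 - ρ i * h i) ≤
      -(1 / 2) * ∑ i ∈ N \ V, h i ^ 2 + 1 / 2 * N.card * e ^ 2 := by
    calc ∑ i ∈ N \ V, (1 / 2 * ρ i ^ 2 - ρ i * h i)
        ≤ ∑ i ∈ N \ V, (-(1 / 2) * h i ^ 2 + 1 / 2 * e ^ 2) :=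
          Finset.sum_le_sum fun i hi ↦ by
            have := sq_le_sq' (abs_le.mp (he i (Finset.mem_sdiff.mp hi).2)).1
              (abs_le.mp (he i (Finset.mem_sdiff.mp hi).2)).2
            linarith
      _ = -(1 / 2) * ∑ i ∈ N \ V, h i ^ 2 + 1 / 2 * (N \ V).card * e ^ 2 := by
          rw [Finset.sum_add_distrib, ← Finset.mul_sum, Finset.sum_const, nsmul_eq_mul]
          ring
      _ ≤ _ := by
          gcongr
          exact Finset.sdiff_subset
  have hbad : ∑ i ∈ N ∩ V, (1 / 2 * ρ i ^ 2 - ρ i * h i) ≤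
      R * (√V.card * enorm2 h) + 1 / 2 * V.card * R ^ 2 := by
    calc ∑ i ∈ N ∩ V, (1 / 2 * ρ i ^ 2 - ρ i * h i)
        ≤ ∑ i ∈ N ∩ V, (R * |h i| + 1 / 2 * R ^ 2) :=
          Finset.sum_le_sum fun i hi ↦ by
            have hρ := hR i (Finset.mem_inter.mp hi).1
            have hmul : -(ρ i * h i) ≤ R * |h i| :=
              (neg_le_abs _).trans (by rw [abs_mul]; gcongr)
            have hsq := sq_le_sq' (abs_le.mp hρ).1 (abs_le.mp hρ).2
            linarith
      _ ≤ ∑ i ∈ V, (R * |h i| + 1 / 2 * R ^ 2) :=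
          Finset.sum_le_sum_of_subset_of_nonneg Finset.inter_subset_right fun i _ _ ↦ by
            positivity
      _ = R * ∑ i ∈ V, |h i| + 1 / 2 * V.card * R ^ 2 := by
          rw [Finset.sum_add_distrib, ← Finset.mul_sum, Finset.sum_const, nsmul_eq_mul]
          ring
      _ ≤ _ := by
          gcongr
          exact sum_abs_le_sqrt_card_mul_enorm2 V h
  rw [← Finset.sum_inter_add_sum_sdiff N V]
  linarith

end SumOverRows

section Constants

/-- The constant `C₁` of the contraction factor `1 - C₁`; `σ` stands for `σ̃_{q-β,min}(A)` and `S`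
for `σ_max(A)`. -/
noncomputable def contractionConst (α σ S q β m n : ℝ) : ℝ :=
  (α * (q - β) / (2 * q ^ 2)) * σ ^ 2 / m -
    (2 * √(β * (1 - β)) / (q * (1 - β - q))) * (S ^ 2 / m + √(1 - β) * S / √(m * n)) -
    (β * (1 - β) / (q * (1 - β - q) ^ 2)) * (S ^ 2 / m + 2 * √(1 - β) * S / √(m * n))

/-- The constant `C₂` in front of the squared noise level; `S` stands for `σ_max(A)`. -/
noncomputable def noiseConst (S q β m n : ℝ) : ℝ :=
  (√β * (1 - β) / (q * (1 - β - q))) * (1 + √(β * (1 - β)) / (1 - β - q)) * √(n / m) * S +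
    (1 / 2) * (β * (1 - β) ^ 2 / (q * (1 - β - q) ^ 2)) + 1 / 2

/-- A bound for the `q`-quantile of the residuals at distance `d` from the solution, for noise
level `e` and `S = σ_max(A)`. -/
noncomputable def quantileRadius (S d e q β m : ℝ) : ℝ :=
  (√(1 - β) * (S * d / √m) + (1 - β) * e) / (1 - β - q)

variable {S d e q β m : ℝ}

lemma quantileRadius_nonneg (hS : 0 ≤ S) (hd : 0 ≤ d) (he : 0 ≤ e) (hq0 : 0 ≤ q)
    (hq : q < 1 - β) : 0 ≤ quantileRadius S d e q β m := by
  have : 0 ≤ 1 - β := hq0.trans hq.le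
  have : 0 < 1 - β - q := sub_pos.mpr hq
  rw [quantileRadius]
  positivity

lemma div_sqrt_add_le_quantileRadius (hS : 0 ≤ S) (hd : 0 ≤ d) (he : 0 ≤ e) (hq0 : 0 ≤ q)
    (hq : q < 1 - β) :
    S * d / √((1 - β - q) * m) + e ≤ quantileRadius S d e q β m := by
  have hp : 0 < 1 - β - q := sub_pos.mpr hq
  have hsqrt : √(1 - β - q) ≤ √(1 - β) := Real.sqrt_le_sqrt (by linarith)
  have hspread : S * d / √m * √(1 - β - q) ≤ S * d / √m * √(1 - β) := by gcongr
  have hnoise : e * (1 - β - q) ≤ e * (1 - β) := mul_le_mul_of_nonneg_left (by linarith) he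
  have hscale : S * d / √((1 - β - q) * m) * (1 - β - q) = S * d / √m * √(1 - β - q) := by
    rw [Real.sqrt_mul hp.le]
    nth_rw 2 [← Real.mul_self_sqrt hp.le]
    field_simp
  rw [quantileRadius, le_div_iff₀ hp, add_mul, hscale]
  linarith

lemma mul_le_two_mul_div_add_mul_sq {ν D : ℝ} (hν : 0 < ν) (hd : 0 ≤ d) (he : 0 ≤ e)
    (hdD : d ^ 2 ≤ 2 * D) : d * e ≤ 2 * D / ν + ν * e ^ 2 := by
  rw [div_add' _ _ _ hν.ne', le_div_iff₀ hν]
  nlinarith [sq_nonneg (d - ν * e), mul_nonneg (mul_nonneg hd he) hν.le]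

lemma mul_radius_add_half_sq_radius_le {s u p K X Y : ℝ} (hs : 0 ≤ s) (hu : 0 ≤ u) (hp : 0 < p)
    (hX : K ^ 2 ≤ X) (hY : K * e ≤ Y) :
    s * K * ((u * K + u ^ 2 * e) / p) + 1 / 2 * s ^ 2 * ((u * K + u ^ 2 * e) / p) ^ 2 ≤
      (s * u / p + 1 / 2 * (s * u / p) ^ 2) * X + (s * u ^ 2 / p) * (1 + s * u / p) * Y +
      1 / 2 * (s * u ^ 2 / p) ^ 2 * e ^ 2 :=
  calc _ = (s * u / p + 1 / 2 * (s * u / p) ^ 2) * K ^ 2 +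
        (s * u ^ 2 / p) * (1 + s * u / p) * (K * e) + 1 / 2 * (s * u ^ 2 / p) ^ 2 * e ^ 2 := by
        field_simp
        ring
    _ ≤ _ := by gcongr

lemma div_mul_quantileRadius_add_sq_le {n D : ℝ} (hS : 0 ≤ S) (hd : 0 ≤ d) (he : 0 ≤ e)
    (hdD : d ^ 2 ≤ 2 * D) (hβ : 0 ≤ β) (hq0 : 0 < q) (hq : q < 1 - β) (hm : 0 < m) (hn : 0 < n) :
    1 / (q * m) * (quantileRadius S d e q β m * (√(β * m) * (S * d)) +
        1 / 2 * (β * m) * quantileRadius S d e q β m ^ 2) ≤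
      ((2 * √(β * (1 - β)) / (q * (1 - β - q))) * (S ^ 2 / m + √(1 - β) * S / √(m * n)) +
        (β * (1 - β) / (q * (1 - β - q) ^ 2)) *
          (S ^ 2 / m + 2 * √(1 - β) * S / √(m * n))) * D +
      (noiseConst S q β m n - 1 / 2) * e ^ 2 := by
  have hp : 0 < 1 - β - q := sub_pos.mpr hq
  have hKK : (S * d / √m) ^ 2 ≤ 2 * D * (S ^ 2 / m) := by
    rw [div_pow, mul_pow, Real.sq_sqrt hm.le, mul_comm (S ^ 2), mul_div_assoc]
    gcongr
  have hKe : S * d / √m * e ≤ S / √m * (2 * D / √n + √n * e ^ 2) := by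
    rw [mul_div_right_comm, mul_assoc]
    gcongr
    exact mul_le_two_mul_div_add_mul_sq (Real.sqrt_pos.mpr hn) hd he hdD
  have hscalar := mul_radius_add_half_sq_radius_le (Real.sqrt_nonneg β)
    (Real.sqrt_nonneg (1 - β)) hp hKK hKe
  rw [noiseConst, quantileRadius, Real.sqrt_mul hβ, Real.sqrt_mul hβ, Real.sqrt_mul hm.le,
    Real.sqrt_div hn.le]
  -- Both sides are rational functions of the square roots of `β`, `1 - β`, `m` and `n`.
  have hs := Real.sq_sqrt hβ
  have hu := Real.sq_sqrt (hq0.trans hq).le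
  have hμ := Real.sq_sqrt hm.le
  have hμ0 := Real.sqrt_pos.mpr hm
  have hν0 := Real.sqrt_pos.mpr hn
  generalize 1 - β - q = p at *
  generalize √β = s, √(1 - β) = u, √m = μ, √n = ν at *
  rw [← hu, ← hs, ← hμ] at *
  have hdiv := mul_le_mul_of_nonneg_left hscalar (one_div_nonneg.mpr hq0.le)
  refine (Eq.trans_le ?_ hdiv).trans_eq ?_
  · field_simp
  · field_simp
    ring

lemma average_le_contractionConst_noiseConst {α σ n D : ℝ} (hα : 0 ≤ α) (hαD : α * D ≤ d ^ 2)
    (hS : 0 ≤ S) (hd : 0 ≤ d) (he : 0 ≤ e) (hdD : d ^ 2 ≤ 2 * D) (hβ : 0 ≤ β) (hq0 : 0 < q)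
    (hq : q < 1 - β) (hm : 0 < m) (hn : 0 < n) :
    1 / (q * m) * (q * m * D + (-(1 / 2) * (σ ^ 2 * d ^ 2) + 1 / 2 * (q * m) * e ^ 2 +
        quantileRadius S d e q β m * (√(β * m) * (S * d)) +
        1 / 2 * (β * m) * quantileRadius S d e q β m ^ 2)) ≤
      (1 - contractionConst α σ S q β m n) * D + noiseConst S q β m n * e ^ 2 := by
  have hD : 0 ≤ D := by linarith [sq_nonneg d]
  have hgain : α * (q - β) / (2 * q ^ 2) * σ ^ 2 / m * D ≤
      1 / (q * m) * (1 / 2 * (σ ^ 2 * d ^ 2)) :=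
    calc _ = (q - β) / q * (1 / (q * m) * (1 / 2 * (σ ^ 2 * (α * D)))) := by field_simp
      _ ≤ 1 / (q * m) * (1 / 2 * (σ ^ 2 * (α * D))) :=
          mul_le_of_le_one_left (by positivity) ((div_le_one hq0).mpr (by linarith))
      _ ≤ _ := by gcongr
  have hbad := div_mul_quantileRadius_add_sq_le hS hd he hdD hβ hq0 hq hm hn
  have hcancel (c : ℝ) : 1 / (q * m) * (q * m * c) = c := by field_simp
  rw [contractionConst]
  linarith [hcancel D, hcancel (e ^ 2)]

end Constants

section Main

variable {m n : ℕ} {A : Matrix (Fin m) (Fin n) ℝ} {x xhat : Fin n → ℝ} {b bc r : Fin m → ℝ}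

lemma abs_mulVec_sub_residual_le (hb : b = A.mulVec xhat + bc + r) {i : Fin m} (hi : bc i = 0) :
    |A.mulVec (x - xhat) i - (ip (A i) x - b i)| ≤ normInf r := by
  have hbi : b i = ip (A i) xhat + bc i + r i := congrFun hb i
  have hmul : A.mulVec (x - xhat) i = ip (A i) x - ip (A i) xhat := ip_sub_right _ _ _
  have hr : A.mulVec (x - xhat) i - (ip (A i) x - b i) = r i := by
    rw [hmul, hbi, hi]
    ring
  exact hr ▸ abs_le_normInf r i

lemma quantileAt_residual_le_quantileRadius (hb : b = A.mulVec xhat + bc + r) {q β : ℝ}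
    (hq0 : 0 < q) (hq : q < 1 - β) (hm : 0 < m)
    (hbc : ((Finset.univ.filter fun i ↦ bc i ≠ 0).card : ℝ) ≤ β * m) {k : ℕ}
    (hk : (k : ℝ) = q * m) :
    quantileAt k (fun i ↦ |ip (A i) x - b i|) ≤
      quantileRadius (sigmaMax A) (enorm2 (x - xhat)) (normInf r) q β m := by
  set V := Finset.univ.filter fun i ↦ bc i ≠ 0
  have hm' : (0 : ℝ) < m := mod_cast hm
  have hk0 : 0 < k := by
    have : (0 : ℝ) < k := hk ▸ mul_pos hq0 hm'
    exact_mod_cast this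
  have hcount : (1 - β - q) * m ≤ m - k - V.card := by
    rw [hk]
    linarith
  have hpm : 0 < (1 - β - q) * m := mul_pos (sub_pos.mpr hq) hm'
  have hkV : k + V.card < m := by
    have : (k + V.card : ℝ) < m := by linarith
    exact_mod_cast this
  have hres (i : Fin m) (hi : i ∉ V) :
      |ip (A i) x - b i| ≤ |A.mulVec (x - xhat) i| + normInf r := by
    have := abs_mulVec_sub_residual_le (x := x) hb (i := i) (by simpa [V] using hi)
    linarith [abs_sub_abs_le_abs_sub (ip (A i) x - b i) (A.mulVec (x - xhat) i),
      abs_sub_comm (ip (A i) x - b i) (A.mulVec (x - xhat) i)]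
  calc _ ≤ enorm2 (A.mulVec (x - xhat)) / √(m - k - V.card) + normInf r :=
        quantileAt_le_enorm2_div_sqrt_add hk0 hkV hres
    _ ≤ sigmaMax A * enorm2 (x - xhat) / √((1 - β - q) * m) + normInf r := by
        gcongr
        · exact mul_nonneg (sigmaMax_nonneg A) (enorm2_nonneg _)
        · exact enorm2_mulVec_le A _
    _ ≤ _ := div_sqrt_add_le_quantileRadius (sigmaMax_nonneg A) (enorm2_nonneg _)
        (normInf_nonneg r) hq0.le hq

lemma sum_half_sq_residual_sub_mul_le {q β : ℝ} (hb : b = A.mulVec xhat + bc + r)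
    (hq0 : 0 < q) (hq : q < 1 - β) (hm : 0 < m)
    (hbc : ((Finset.univ.filter fun i ↦ bc i ≠ 0).card : ℝ) ≤ β * m) {k : ℕ}
    (hk : (k : ℝ) ≤ (q - β) * m) {N : Finset (Fin m)} (hNcard : (N.card : ℝ) = q * m)
    (hN : ∀ i ∈ N,
      |ip (A i) x - b i| ≤ quantileAt N.card fun i ↦ |ip (A i) x - b i|) :
    ∑ i ∈ N, (1 / 2 * (ip (A i) x - b i) ^ 2 - (ip (A i) x - b i) * A.mulVec (x - xhat) i) ≤
      -(1 / 2) * (sigmaTildeQBMin A k ^ 2 * enorm2 (x - xhat) ^ 2) +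
      1 / 2 * (q * m) * normInf r ^ 2 +
      quantileRadius (sigmaMax A) (enorm2 (x - xhat)) (normInf r) q β m *
        (√(β * m) * (sigmaMax A * enorm2 (x - xhat))) +
      1 / 2 * (β * m) *
        quantileRadius (sigmaMax A) (enorm2 (x - xhat)) (normInf r) q β m ^ 2 := by
  set V := Finset.univ.filter fun i ↦ bc i ≠ 0
  set R := quantileRadius (sigmaMax A) (enorm2 (x - xhat)) (normInf r) q β m
  have hR0 : 0 ≤ R := quantileRadius_nonneg (sigmaMax_nonneg A) (enorm2_nonneg _)
    (normInf_nonneg r) hq0.le hq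
  have hR (i : Fin m) (hi : i ∈ N) : |ip (A i) x - b i| ≤ R :=
    (hN i hi).trans (quantileAt_residual_le_quantileRadius hb hq0 hq hm hbc hNcard)
  have hnoise (i : Fin m) (hi : i ∉ V) :
      |A.mulVec (x - xhat) i - (ip (A i) x - b i)| ≤ normInf r :=
    abs_mulVec_sub_residual_le hb (by simpa [V] using hi)
  have hkNV : k ≤ (N \ V).card := by
    have hle : (k + V.card : ℝ) ≤ N.card := by
      rw [hNcard]
      linarith
    have : k + V.card ≤ N.card := mod_cast hle
    have := Finset.le_card_sdiff V N
    lia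
  have hgain := sq_sigmaTildeQBMin_mul_le A hkNV (x - xhat)
  calc _ ≤ _ := sum_half_sq_sub_mul_le hR0 hR hnoise
    _ ≤ _ := by
        rw [hNcard]
        gcongr ?_ + _ + R * (√?_ * ?_) + 1 / 2 * ?_ * _
        · linarith
        · exact enorm2_nonneg _
        · exact enorm2_mulVec_le A _

end Main

theorem stmt11_general {m n : ℕ} {lam : ℝ} (hlam : 0 ≤ lam) {A : Matrix (Fin m) (Fin n) ℝ}
    (hrows : ∀ i, enorm2 (A i) = 1) (hm : 0 < m) {q β : ℝ} (hβq : β < q) (hq : q < 1 - β)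
    {k : ℕ} (hk : (k : ℝ) ≤ (q - β) * m) {xhat : Fin n → ℝ} (hxhat : xhat ≠ 0)
    {b bc r : Fin m → ℝ} (hb : b = A.mulVec xhat + bc + r)
    (hbc : ((Finset.univ.filter fun i ↦ bc i ≠ 0).card : ℝ) ≤ β * m)
    {x xs : Fin n → ℝ} (hxs : xs ∈ subdiff (sparseObjective lam) x)
    {N : Finset (Fin m)} (hNcard : (N.card : ℝ) = q * m)
    (hN : ∀ i ∈ N, |ip (A i) x - b i| ≤ quantileAt N.card fun i ↦ |ip (A i) x - b i|)
    {t : Fin m → ℝ} (ht : ∀ i ∈ N, IsExactStep (sparseObjective lam) xs (A i) (b i) (t i))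
    {x' : Fin m → Fin n → ℝ}
    (hx' : ∀ i ∈ N, xs - t i • A i ∈ subdiff (sparseObjective lam) (x' i)) :
    1 / (q * m) * ∑ i ∈ N, breg (sparseObjective lam) (xs - t i • A i) (x' i) xhat ≤
      (1 - contractionConst (xminOf xhat / (xminOf xhat + 2 * lam)) (sigmaTildeQBMin A k)
        (sigmaMax A) q β m n) * breg (sparseObjective lam) xs x xhat +
      noiseConst (sigmaMax A) q β m n * normInf r ^ 2 +
      2 * lam / (q * m) * enorm2 (b - A.mulVec xhat) * norm12 A := by
  set D := breg (sparseObjective lam) xs x xhat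
  set α := xminOf xhat / (xminOf xhat + 2 * lam)
  have hm' : (0 : ℝ) < m := mod_cast hm
  have hn : (0 : ℝ) < n := by
    obtain ⟨j, -⟩ := Function.ne_iff.mp hxhat
    exact_mod_cast j.pos
  have hβ : 0 ≤ β := nonneg_of_mul_nonneg_left ((Nat.cast_nonneg _).trans hbc) hm'
  have hq0 : 0 < q := hβ.trans_lt hβq
  have hα : 0 ≤ α := by
    have := xminOf_pos hxhat
    positivity
  have hdist : enorm2 (x - xhat) ^ 2 = enorm2 (xhat - x) ^ 2 := by
    rw [enorm2_sub_sq, enorm2_sub_sq, ip_comm]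
    ring
  have hdD : enorm2 (x - xhat) ^ 2 ≤ 2 * D := by
    linarith [mem_strongSubdiff_sparseObjective hlam hxs xhat]
  have hαD : α * D ≤ enorm2 (x - xhat) ^ 2 :=
    hdist ▸ xminOf_div_mul_breg_sparseObjective_le hlam hxhat hxs
  have hsum := sum_breg_sparseObjective_exactStep_le hlam hrows hxs ht hx' xhat
  have hres := sum_half_sq_residual_sub_mul_le hb hq0 hq hm hbc hk hNcard hN
  have haverage := average_le_contractionConst_noiseConst (σ := sigmaTildeQBMin A k) hα hαD
    (sigmaMax_nonneg A) (enorm2_nonneg _) (normInf_nonneg r) hdD hβ hq0 hq hm' hn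
  rw [hNcard] at hsum
  have hscaled := mul_le_mul_of_nonneg_left
    (hsum.trans (add_le_add_left (add_le_add_right hres _) _))
    (one_div_nonneg.mpr (mul_pos hq0 hm').le)
  rw [mul_add] at hscaled
  refine (hscaled.trans (add_le_add_left haverage _)).trans_eq ?_
  ring

/-- one-step expectation bound for Quantile-RaSK with exact step,
Theorem 3.2(b). -/
theorem stmt11 {m n : ℕ} (lam : ℝ) (hlam : 0 < lam)
    (f : (Fin n → ℝ) → ℝ)
    (hf : f = fun x => lam * norm1 x + (1 / 2) * enorm2 x ^ 2)
    (A : Matrix (Fin m) (Fin n) ℝ)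
    (hrank : A.rank = min m n) (hrows : ∀ i, enorm2 (A i) = 1)
    (q β : ℝ) (hβq : β < q) (hq : q < 1 - β)
    (kq kb kqb : ℕ)
    (hkq : (kq : ℝ) = q * m) (hkb : (kb : ℝ) = β * m) (hkqb : (kqb : ℝ) = (q - β) * m)
    (xhat : Fin n → ℝ) (hAx : A.mulVec xhat ≠ 0)
    (hmin : ∀ z, A.mulVec z = A.mulVec xhat → z ≠ xhat → f xhat < f z)
    (bc r : Fin m → ℝ)
    (hbc : (Finset.univ.filter (fun i => bc i ≠ 0)).card = kb)
    (b : Fin m → ℝ) (hb : b = A.mulVec xhat + bc + r)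
    (αc : ℝ) (hαc : αc = xminOf xhat / (xminOf xhat + 2 * lam))
    -- condition (♦)
    (hcond :
      (2 * Real.sqrt (β * (1 - β)) / (1 - β - q)) *
          (sigmaMax A + Real.sqrt ((1 - β) * m / n)) +
        (β * (1 - β) / (1 - β - q) ^ 2) *
          (sigmaMax A + 2 * Real.sqrt ((1 - β) * m / n)) <
      (αc * (q - β) / (2 * q)) * (sigmaTildeQBMin A kqb) ^ 2 / sigmaMax A)
    (x xs : Fin n → ℝ) (hxs : xs ∈ subdiff f x)
    (hrange : ∃ u : Fin m → ℝ, xs = A.transpose.mulVec u)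
    (Q : ℝ) (hQ : Q = quantileAt kq (fun i => |ip (A i) x - b i|))
    (N2 : Finset (Fin m)) (hN2 : N2 = Finset.univ.filter (fun i => |ip (A i) x - b i| ≤ Q))
    (hN2card : N2.card = kq)
    -- exact-step update
    (t : Fin m → ℝ)
    (ht : ∀ i ∈ N2, ∀ s : ℝ,
      fconj f (xs - t i • A i) + t i * b i ≤ fconj f (xs - s • A i) + s * b i)
    (xs' x' : Fin m → (Fin n → ℝ))
    (hxs' : ∀ i ∈ N2, xs' i = xs - t i • A i)
    (hx' : ∀ i ∈ N2, xs' i ∈ subdiff f (x' i))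
    (C1 C2 : ℝ)
    (hC1 : C1 = (αc * (q - β) / (2 * q ^ 2)) * (sigmaTildeQBMin A kqb) ^ 2 / m -
        (2 * Real.sqrt (β * (1 - β)) / (q * (1 - β - q))) *
          ((sigmaMax A) ^ 2 / m + Real.sqrt (1 - β) * sigmaMax A / Real.sqrt (m * n)) -
        (β * (1 - β) / (q * (1 - β - q) ^ 2)) *
          ((sigmaMax A) ^ 2 / m + 2 * Real.sqrt (1 - β) * sigmaMax A / Real.sqrt (m * n)))
    (hC2 : C2 = (Real.sqrt β * (1 - β) / (q * (1 - β - q))) *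
          (1 + Real.sqrt (β * (1 - β)) / (1 - β - q)) * Real.sqrt (n / m) * sigmaMax A +
        (1 / 2) * (β * (1 - β) ^ 2 / (q * (1 - β - q) ^ 2)) + 1 / 2) :
    (1 / (q * m)) * ∑ i ∈ N2, breg f (xs' i) (x' i) xhat ≤
      (1 - C1) * breg f xs x xhat + C2 * normInf r ^ 2 +
        (2 / Real.sqrt (q * m)) * normInf r * norm12 A +
        (2 * lam / (q * m)) * enorm2 (b - A.mulVec xhat) * norm12 A := by
  subst hf hαc hC1 hC2 hQ hN2card
  obtain ⟨i, -⟩ := Function.ne_iff.mp hAx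
  have hxhat : xhat ≠ 0 := fun h ↦ hAx (h ▸ A.mulVec_zero)
  have hslack : 0 ≤ 2 / √(q * m) * normInf r * norm12 A :=
    mul_nonneg (mul_nonneg (by positivity) (normInf_nonneg r)) (norm12_nonneg A)
  have hres (i : Fin m) (hi : i ∈ N2) :
      |ip (A i) x - b i| ≤ quantileAt N2.card fun i ↦ |ip (A i) x - b i| := by
    rw [hN2] at hi
    exact (Finset.mem_filter.mp hi).2
  have hmain := stmt11_general hlam.le hrows i.pos hβq hq hkqb.le hxhat hb (by rw [hbc, hkb]) hxs
    hkq hres ht fun i hi ↦ hxs' i hi ▸ hx' i hi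
  rw [Finset.sum_congr rfl fun i hi ↦ by rw [hxs' i hi]]
  exact hmain.trans (add_le_add_left (le_add_of_nonneg_right hslack) _)
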